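/- Let V₁ and V₂ be two C₀-semigroups on a complex Hilbert space H. Then V₁ and V₂ are doubly commuting completely nonunitary semigroups of isometries if and only if (V₁, V₂) is a bishift-semigroup, i.e., there exist a Hilbert space F and a unitary Z : H → L²(ℝ₊², F) such that Z V_{1,t} Z* = 𝒮_{1,t}^F and Z V_{2,t} Z* = 𝒮_{2,t}^F for all t ≥ 0. -/

import Mathlib

open MeasureTheory ContinuousLinearMap
open scoped ENNReal NNReal InnerProductSpace ComplexInnerProductSpace

noncomputable section

section SemigroupDefs

variable {G : Type} [NormedAddCommGroup G] [InnerProductSpace ℂ G] [CompleteSpace G]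

/-- A (C₀-) strongly continuous one-parameter semigroup of bounded operators. -/
def IsC0Semigroup (V : ℝ≥0 → G →L[ℂ] G) : Prop :=
  V 0 = 1 ∧ (∀ s t : ℝ≥0, V (s + t) = V s ∘L V t) ∧ ∀ x : G, Continuous fun t : ℝ≥0 => V t x

/-- A C₀-semigroup of isometries. -/
def IsIsometrySemigroup (V : ℝ≥0 → G →L[ℂ] G) : Prop :=
  IsC0Semigroup V ∧ ∀ (t : ℝ≥0) (x : G), ‖V t x‖ = ‖x‖

/-- The closed subspace `L` reduces the semigroup `V`: it is invariant under every `V t`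
and every `(V t)*`. -/
def ReducedBy (V : ℝ≥0 → G →L[ℂ] G) (L : Submodule ℂ G) : Prop :=
  (∀ t : ℝ≥0, ∀ x ∈ L, V t x ∈ L) ∧ ∀ t : ℝ≥0, ∀ x ∈ L, adjoint (V t) x ∈ L

/-- `T` restricts to a unitary operator on the subspace `L`. -/
def RestrictsToUnitaryOn (T : G →L[ℂ] G) (L : Submodule ℂ G) : Prop :=
  (∀ x ∈ L, T x ∈ L) ∧ (∀ x ∈ L, ‖T x‖ = ‖x‖) ∧ ∀ y ∈ L, ∃ x ∈ L, T x = y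

/-- Every `V t` restricts to a unitary operator on the subspace `L`. -/
def IsUnitarySemigroupOn (V : ℝ≥0 → G →L[ℂ] G) (L : Submodule ℂ G) : Prop :=
  ∀ t : ℝ≥0, RestrictsToUnitaryOn (V t) L

/-- A unitary C₀-semigroup: every `V t` is a surjective isometry. -/
def IsUnitarySemigroup (V : ℝ≥0 → G →L[ℂ] G) : Prop :=
  IsC0Semigroup V ∧ ∀ t : ℝ≥0, (∀ x : G, ‖V t x‖ = ‖x‖) ∧ Function.Surjective (V t)

/-- `V` is completely nonunitary on the subspace `K`: there is no nonzero closed subspace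
of `K` reducing `V` on which every `V t` restricts to a unitary. -/
def IsCnuOn (V : ℝ≥0 → G →L[ℂ] G) (K : Submodule ℂ G) : Prop :=
  ∀ L : Submodule ℂ G, IsClosed (L : Set G) → L ≤ K → ReducedBy V L →
    IsUnitarySemigroupOn V L → L = ⊥

/-- A completely nonunitary semigroup. -/
def IsCnu (V : ℝ≥0 → G →L[ℂ] G) : Prop := IsCnuOn V ⊤

/-- Two semigroups commute. -/
def SgCommute (V1 V2 : ℝ≥0 → G →L[ℂ] G) : Prop :=
  ∀ t s : ℝ≥0, V1 t ∘L V2 s = V2 s ∘L V1 t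

/-- Two semigroups doubly commute. -/
def SgDoublyCommute (V1 V2 : ℝ≥0 → G →L[ℂ] G) : Prop :=
  SgCommute V1 V2 ∧ ∀ t s : ℝ≥0, V1 t ∘L adjoint (V2 s) = adjoint (V2 s) ∘L V1 t

/-- A completely nonunitary pair of semigroups: no nonzero closed subspace reduces both
semigroups in such a way that both restrict to unitary semigroups. -/
def IsCnuPair (V1 V2 : ℝ≥0 → G →L[ℂ] G) : Prop :=
  ∀ L : Submodule ℂ G, IsClosed (L : Set G) → ReducedBy V1 L → ReducedBy V2 L →
    IsUnitarySemigroupOn V1 L → IsUnitarySemigroupOn V2 L → L = ⊥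

/-- A strongly continuous one-parameter unitary group. -/
def IsUnitaryGroup (U : ℝ → G →L[ℂ] G) : Prop :=
  U 0 = 1 ∧ (∀ s t : ℝ, U (s + t) = U s ∘L U t) ∧
  (∀ (t : ℝ) (x : G), ‖U t x‖ = ‖x‖) ∧ (∀ t : ℝ, Function.Surjective (U t)) ∧
  ∀ x : G, Continuous fun t : ℝ => U t x

/-- Two subspaces are mutually orthogonal. -/
def OrthoSubspaces (A B : Submodule ℂ G) : Prop :=
  ∀ x ∈ A, ∀ y ∈ B, ⟪x, y⟫_ℂ = 0

end SemigroupDefs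

/-- The closed first quadrant `ℝ₊² ⊆ ℝ²`. -/
def QQ : Set (ℝ × ℝ) := {p | 0 ≤ p.1 ∧ 0 ≤ p.2}

/-- Lebesgue measure on `ℝ²` restricted to the quadrant `ℝ₊²`; `Lp F 2 nuQ` plays the
role of `L²(ℝ₊², F)`. -/
def nuQ : Measure (ℝ × ℝ) := (volume : Measure (ℝ × ℝ)).restrict QQ

/-- Lebesgue measure on `ℝ²` restricted to `ℝ² ∖ ℝ₊²`; `Lp F 2 nuQc` plays the role of
`L²(ℝ² ∖ ℝ₊², F)`. -/
def nuQc : Measure (ℝ × ℝ) := (volume : Measure (ℝ × ℝ)).restrict QQᶜ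

/-- `(V1, V2)` is a bishift-semigroup: it is jointly unitarily equivalent to the pair
`(𝒮₁^F, 𝒮₂^F)` of shift semigroups on `L²(ℝ₊², F)` for some Hilbert space `F`. -/
def IsBishiftPair {G : Type} [NormedAddCommGroup G] [InnerProductSpace ℂ G] [CompleteSpace G]
    (V1 V2 : ℝ≥0 → G →L[ℂ] G) : Prop :=
  ∃ (F : Type) (_ : NormedAddCommGroup F) (_ : InnerProductSpace ℂ F) (_ : CompleteSpace F)
    (Z : G ≃ₗᵢ[ℂ] Lp F 2 nuQ),
    ∀ (t : ℝ≥0) (x : G),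
      ((Z (V1 t x) : ℝ × ℝ → F) =ᵐ[nuQ]
        fun p => if (t : ℝ) ≤ p.1 then (Z x : ℝ × ℝ → F) (p.1 - (t : ℝ), p.2) else 0) ∧
      ((Z (V2 t x) : ℝ × ℝ → F) =ᵐ[nuQ]
        fun p => if (t : ℝ) ≤ p.2 then (Z x : ℝ × ℝ → F) (p.1, p.2 - (t : ℝ)) else 0)

/-!
In `L²(ℝ₊², F)` the functions `2 exp (s - p₁) exp (t - p₂) • w` on `[s, ∞) × [t, ∞)` form a total
family on which the two shift semigroups act by translating `s` and `t`, and their Gram matrix is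
`exp (-|s - s'|) exp (-|t - t'|) ⟪w, w'⟫`. Since total families with equal Gram matrices are
unitarily equivalent, a pair of semigroups is a bishift-semigroup if and only if it acts by
translation on such a family. On the family the adjoints are explicit, which shows that the pair
doubly commutes and consists of completely nonunitary isometries.

Conversely, for a doubly commuting completely nonunitary pair take the vectors `V₁ₛ V₂ₜ w`, where
`w` runs over the common eigenvectors `Vᵢₜ* w = exp (-t) w`. Totality comes from the operators
`Qᵢ = ½ (1 - Cᵢ Cᵢ*)`, where `Cᵢ = 1 - 2 ∫₀^∞ exp (-t) Vᵢₜ dt` is the cogenerator. As `Cᵢ* Cᵢ = 1`,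
the range of `Qᵢ` consists of eigenvectors of `Vᵢₜ*`. If `Qᵢ Vᵢₜ* x = 0` for all `t`, then
`‖Vᵢₜ* (1 - Cᵢ*) x‖` does not depend on `t`, so `(1 - Cᵢ*) x` lies in the unitary part of `Vᵢ`,
whence `x = 0`. Double commutativity lets `Q₁` commute with `V₂ₜ*`, so that `Q₁ Q₂` maps into the
common eigenvectors.
-/

section TotalFamily

variable {𝕜 E F ι : Type*} [RCLike 𝕜] [NormedAddCommGroup E] [InnerProductSpace 𝕜 E]

/-- A total family of vectors: only the zero vector is orthogonal to all of them. In a Hilbert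
space this says that the linear span of the family is dense. -/
def IsTotalFamily (𝕜 : Type*) [RCLike 𝕜] [InnerProductSpace 𝕜 E] (a : ι → E) : Prop :=
  ∀ x, (∀ i, inner 𝕜 (a i) x = 0) → x = 0

theorem IsTotalFamily.dense_span [CompleteSpace E] {a : ι → E} (ha : IsTotalFamily 𝕜 a) :
    Dense (Submodule.span 𝕜 (Set.range a) : Set E) := by
  rw [Submodule.dense_iff_topologicalClosure_eq_top, Submodule.topologicalClosure_eq_top_iff,
    Submodule.eq_bot_iff]
  exact fun x hx => ha x fun i =>
    (Submodule.mem_orthogonal _ _).1 hx _ (Submodule.subset_span ⟨i, rfl⟩)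

theorem IsTotalFamily.denseRange_linearCombination [CompleteSpace E] {a : ι → E}
    (ha : IsTotalFamily 𝕜 a) : DenseRange (Finsupp.linearCombination 𝕜 a) := by
  have h := ha.dense_span
  rwa [← Finsupp.range_linearCombination] at h

theorem IsTotalFamily.clm_ext [NormedAddCommGroup F] [NormedSpace 𝕜 F] [CompleteSpace E]
    {a : ι → E} (ha : IsTotalFamily 𝕜 a) {S T : E →L[𝕜] F} (h : ∀ i, S (a i) = T (a i)) :
    S = T :=
  ContinuousLinearMap.ext_on ha.dense_span (Set.forall_mem_range.2 h)

variable [NormedAddCommGroup F] [InnerProductSpace 𝕜 F]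

theorem IsTotalFamily.map {a : ι → E} (ha : IsTotalFamily 𝕜 a) (e : E ≃ₗᵢ[𝕜] F) :
    IsTotalFamily 𝕜 fun i => e (a i) := fun x hx => by
  have h : e.symm x = 0 := ha _ fun i => by
    rw [← hx i, ← e.inner_map_map, e.apply_symm_apply]
  simpa only [map_eq_zero_iff _ e.symm.injective] using h

theorem norm_linearCombination_eq_of_inner_eq {a : ι → E} {b : ι → F}
    (hab : ∀ i j, inner 𝕜 (a i) (a j) = inner 𝕜 (b i) (b j)) (c : ι →₀ 𝕜) :
    ‖Finsupp.linearCombination 𝕜 a c‖ = ‖Finsupp.linearCombination 𝕜 b c‖ := by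
  simp only [norm_eq_sqrt_re_inner (𝕜 := 𝕜), Finsupp.linearCombination_apply, Finsupp.sum_inner,
    Finsupp.inner_sum, inner_smul_left, inner_smul_right, hab]

theorem IsTotalFamily.exists_linearIsometryEquiv [CompleteSpace E] [CompleteSpace F] {a : ι → E}
    {b : ι → F} (ha : IsTotalFamily 𝕜 a) (hb : IsTotalFamily 𝕜 b)
    (hab : ∀ i j, inner 𝕜 (a i) (a j) = inner 𝕜 (b i) (b j)) :
    ∃ Z : E ≃ₗᵢ[𝕜] F, ∀ i, Z (a i) = b i := by
  have hnorm (c : ι →₀ 𝕜) : ‖Finsupp.linearCombination 𝕜 b (LinearEquiv.refl 𝕜 _ c)‖ =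
      ‖Finsupp.linearCombination 𝕜 a c‖ := (norm_linearCombination_eq_of_inner_eq hab c).symm
  refine ⟨(LinearEquiv.refl 𝕜 (ι →₀ 𝕜)).extendOfIsometry _ _ ha.denseRange_linearCombination
    hb.denseRange_linearCombination hnorm, fun i => ?_⟩
  simpa using (LinearEquiv.refl 𝕜 (ι →₀ 𝕜)).extendOfIsometry_eq _ _
    ha.denseRange_linearCombination hb.denseRange_linearCombination hnorm (Finsupp.single i 1)

end TotalFamily

section Contraction

variable {𝕜 E : Type*} [RCLike 𝕜] [NormedAddCommGroup E] [InnerProductSpace 𝕜 E] [CompleteSpace E]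

theorem norm_adjoint_apply_sub_sq_le {T : E →L[𝕜] E} (hT : ‖T‖ ≤ 1) (x : E) :
    ‖adjoint T x - x‖ ^ 2 ≤ 2 * ‖x‖ * ‖T x - x‖ := by
  have hadj : ‖adjoint T x‖ ≤ ‖x‖ := by
    simpa using (adjoint T).le_of_opNorm_le ((norm_map adjoint T).trans_le hT) x
  have hre : RCLike.re (inner 𝕜 (adjoint T x) x) = ‖x‖ ^ 2 - RCLike.re (inner 𝕜 x (x - T x)) := by
    rw [adjoint_inner_left, inner_sub_right, map_sub, inner_self_eq_norm_sq, sub_sub_cancel]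
  have hcs : RCLike.re (inner 𝕜 x (x - T x)) ≤ ‖x‖ * ‖T x - x‖ :=
    norm_sub_rev (T x) x ▸ re_inner_le_norm x (x - T x)
  rw [norm_sub_sq (𝕜 := 𝕜), hre]
  nlinarith [norm_nonneg (adjoint T x)]

theorem adjoint_apply_apply_of_norm_eq {T : E →L[𝕜] E} (hT : ‖T‖ ≤ 1) {x : E}
    (hx : ‖T x‖ = ‖x‖) : adjoint T (T x) = x := by
  have hadj : ‖adjoint T (T x)‖ ≤ ‖x‖ := by
    simpa [hx] using (adjoint T).le_of_opNorm_le ((norm_map adjoint T).trans_le hT) (T x)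
  have hsq : ‖adjoint T (T x) - x‖ ^ 2 ≤ 0 := by
    rw [norm_sub_sq (𝕜 := 𝕜), adjoint_inner_left, inner_self_eq_norm_sq, hx]
    nlinarith [norm_nonneg (adjoint T (T x))]
  simpa [sub_eq_zero] using hsq.antisymm (sq_nonneg _)

end Contraction

section ContractionSemigroup

open Set Filter Topology

variable {G : Type} [NormedAddCommGroup G] [InnerProductSpace ℂ G]

/-- A C₀-semigroup of contractions; the adjoints of a C₀-semigroup of isometries form one. -/
structure IsContractionSemigroup (U : ℝ≥0 → G →L[ℂ] G) : Prop where
  isC0Semigroup : IsC0Semigroup U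
  norm_le_one : ∀ t, ‖U t‖ ≤ 1

/-- The orbit of `x` damped by `e⁻ᵗ`, which is integrable over the half-line. -/
def dampedOrbit (U : ℝ≥0 → G →L[ℂ] G) (x : G) (t : ℝ) : G :=
  Real.exp (-t) • U t.toNNReal x

theorem continuous_of_tendsto_zero {U : ℝ≥0 → G →L[ℂ] G}
    (hadd : ∀ s t, U (s + t) = U s ∘L U t) (hle : ∀ t, ‖U t‖ ≤ 1) {x : G}
    (hx : Tendsto (fun t => U t x) (𝓝 0) (𝓝 x)) : Continuous fun t => U t x := by
  have hstep (s r : ℝ≥0) : dist (U (s + r) x) (U s x) ≤ ‖U r x - x‖ := by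
    rw [dist_eq_norm, hadd, comp_apply, ← map_sub]
    simpa using (U s).le_of_opNorm_le (hle s) (U r x - x)
  have hdist (s t : ℝ≥0) : dist (U t x) (U s x) ≤ ‖U (nndist t s) x - x‖ := by
    rcases le_total s t with h | h <;> obtain ⟨r, rfl⟩ := exists_add_of_le h
    · simpa [NNReal.nndist_eq, tsub_eq_zero_of_le] using hstep s r
    · simpa [NNReal.nndist_eq, tsub_eq_zero_of_le, dist_comm] using hstep t r
  refine continuous_iff_continuousAt.2 fun s => tendsto_iff_dist_tendsto_zero.2 ?_
  have hs : Tendsto (fun t => nndist t s) (𝓝 s) (𝓝 0) := by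
    simpa using (continuous_id.nndist (continuous_const (y := s))).tendsto s
  exact squeeze_zero (fun _ => dist_nonneg) (hdist s)
    (tendsto_iff_norm_sub_tendsto_zero.1 (hx.comp hs))

namespace IsC0Semigroup

variable {U : ℝ≥0 → G →L[ℂ] G}

theorem add_apply (hU : IsC0Semigroup U) (s t : ℝ≥0) (x : G) : U (s + t) x = U s (U t x) := by
  rw [hU.2.1, comp_apply]

theorem commute (hU : IsC0Semigroup U) (s t : ℝ≥0) : Commute (U s) (U t) := by
  change U s ∘L U t = U t ∘L U s
  rw [← hU.2.1, ← hU.2.1, add_comm]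

theorem continuous_toNNReal (hU : IsC0Semigroup U) (x : G) :
    Continuous fun t : ℝ => U t.toNNReal x :=
  (hU.2.2 x).comp continuous_real_toNNReal

theorem continuous_dampedOrbit (hU : IsC0Semigroup U) (x : G) : Continuous (dampedOrbit U x) :=
  (Real.continuous_exp.comp continuous_neg).smul (hU.continuous_toNNReal x)

end IsC0Semigroup

namespace IsContractionSemigroup

variable {U : ℝ≥0 → G →L[ℂ] G}

theorem norm_dampedOrbit_le (hU : IsContractionSemigroup U) (x : G) (t : ℝ) :
    ‖dampedOrbit U x t‖ ≤ Real.exp (-t) * ‖x‖ := by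
  rw [dampedOrbit, norm_smul, Real.norm_eq_abs, Real.abs_exp]
  gcongr
  simpa using (U t.toNNReal).le_of_opNorm_le (hU.norm_le_one _) x

theorem integrableOn_dampedOrbit (hU : IsContractionSemigroup U) (x : G) (c : ℝ) :
    IntegrableOn (dampedOrbit U x) (Ioi c) :=
  ((integrableOn_exp_neg_Ioi c).mul_const ‖x‖).mono'
    (hU.isC0Semigroup.continuous_dampedOrbit x).aestronglyMeasurable
    (Eventually.of_forall (hU.norm_dampedOrbit_le x))

/-- The resolvent `(1 - A)⁻¹ = ∫₀^∞ e⁻ᵗ Uₜ dt` of the generator `A` of the semigroup at `1`. -/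
def resolvent (hU : IsContractionSemigroup U) : G →L[ℂ] G :=
  LinearMap.mkContinuous
    { toFun := fun x => ∫ t in Ioi (0 : ℝ), dampedOrbit U x t
      map_add' := fun x y => by
        simp only [dampedOrbit, map_add, smul_add]
        exact integral_add (hU.integrableOn_dampedOrbit x 0) (hU.integrableOn_dampedOrbit y 0)
      map_smul' := fun c x => by
        simp only [dampedOrbit, map_smul, smul_comm _ c, integral_smul, RingHom.id_apply] }
    1 fun x => (norm_integral_le_of_norm_le ((integrableOn_exp_neg_Ioi 0).mul_const ‖x‖)
      (Eventually.of_forall (hU.norm_dampedOrbit_le x))).trans_eq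
        (by rw [integral_mul_const, integral_exp_neg_Ioi_zero])

theorem resolvent_apply (hU : IsContractionSemigroup U) (x : G) :
    hU.resolvent x = ∫ t in Ioi (0 : ℝ), dampedOrbit U x t := rfl

variable [CompleteSpace G]

protected theorem adjoint (hU : IsContractionSemigroup U) :
    IsContractionSemigroup fun t => adjoint (U t) := by
  have hle (t : ℝ≥0) : ‖adjoint (U t)‖ ≤ 1 := (norm_map adjoint (U t)).trans_le (hU.norm_le_one t)
  have hadd (s t : ℝ≥0) : adjoint (U (s + t)) = adjoint (U s) ∘L adjoint (U t) := by
    rw [add_comm, hU.isC0Semigroup.2.1, adjoint_comp]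
  refine ⟨⟨by simp only [hU.isC0Semigroup.1, ← star_eq_adjoint, star_one], hadd, fun x => ?_⟩, hle⟩
  refine continuous_of_tendsto_zero hadd hle (tendsto_iff_norm_sub_tendsto_zero.2 ?_)
  have hsq : Tendsto (fun t => √(2 * ‖x‖ * ‖U t x - x‖)) (𝓝 0) (𝓝 0) := by
    have hcont : Continuous fun t => √(2 * ‖x‖ * ‖U t x - x‖) := by
      have := hU.isC0Semigroup.2.2 x
      fun_prop
    simpa [hU.isC0Semigroup.1] using hcont.tendsto 0
  exact squeeze_zero (fun _ => norm_nonneg _)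
    (fun t => Real.le_sqrt_of_sq_le (norm_adjoint_apply_sub_sq_le (hU.norm_le_one t) x)) hsq

theorem commute_resolvent (hU : IsContractionSemigroup U) {T : G →L[ℂ] G}
    (hT : ∀ t, Commute T (U t)) : Commute T hU.resolvent := by
  ext x
  rw [mul_apply_eq_comp, mul_apply_eq_comp, resolvent_apply, resolvent_apply,
    ← T.integral_comp_comm (hU.integrableOn_dampedOrbit x 0)]
  refine integral_congr_ae (Eventually.of_forall fun t => ?_)
  simp only [dampedOrbit, T.map_smul_of_tower, ← mul_apply_eq_comp, (hT _).eq]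

theorem resolvent_adjoint (hU : IsContractionSemigroup U) :
    hU.adjoint.resolvent = adjoint hU.resolvent := by
  refine (eq_adjoint_iff _ _).2 fun x y => ?_
  rw [resolvent_apply, resolvent_apply, ← inner_conj_symm,
    ← integral_inner (hU.adjoint.integrableOn_dampedOrbit x 0),
    ← integral_inner (hU.integrableOn_dampedOrbit y 0), ← integral_conj]
  refine integral_congr_ae (Eventually.of_forall fun t => ?_)
  simp only
  rw [inner_conj_symm, dampedOrbit, dampedOrbit, inner_smul_left_eq_smul, inner_smul_right_eq_smul,
    adjoint_inner_left]

theorem apply_resolvent_eq (hU : IsContractionSemigroup U) (x : G) {t : ℝ} (ht : 0 ≤ t) :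
    U t.toNNReal (hU.resolvent x) =
      Real.exp t • (hU.resolvent x - ∫ s in (0 : ℝ)..t, dampedOrbit U x s) := by
  have htail : hU.resolvent x - ∫ s in (0 : ℝ)..t, dampedOrbit U x s =
      ∫ s in Ioi (0 : ℝ), dampedOrbit U x (s + t) := by
    rw [resolvent_apply, ← intervalIntegral.integral_Ioi_sub_Ioi (hU.integrableOn_dampedOrbit x 0)
      ht, sub_sub_cancel, ← (measurePreserving_add_right volume t).setIntegral_preimage_emb
      (measurableEmbedding_addRight t)]
    simp
  rw [htail, resolvent_apply, ← ContinuousLinearMap.integral_comp_comm _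
    (hU.integrableOn_dampedOrbit x 0), ← integral_smul]
  refine setIntegral_congr_fun measurableSet_Ioi fun s hs => ?_
  simp only [dampedOrbit, ContinuousLinearMap.map_smul_of_tower, smul_smul, ← Real.exp_add]
  rw [add_comm s, Real.toNNReal_add ht (mem_Ioi.1 hs).le, hU.isC0Semigroup.add_apply, neg_add,
    add_neg_cancel_left]

theorem hasDerivWithinAt_apply_resolvent (hU : IsContractionSemigroup U) (x : G) {t : ℝ}
    (ht : 0 ≤ t) :
    HasDerivWithinAt (fun t : ℝ => U t.toNNReal (hU.resolvent x))
      (U t.toNNReal (hU.resolvent x) - U t.toNNReal x) (Ici t) t := by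
  have hcont := hU.isC0Semigroup.continuous_dampedOrbit x
  have hint : HasDerivAt (fun t : ℝ => ∫ s in (0 : ℝ)..t, dampedOrbit U x s)
      (dampedOrbit U x t) t :=
    intervalIntegral.integral_hasDerivAt_right (hcont.intervalIntegrable _ _)
      (hcont.stronglyMeasurableAtFilter _ _) hcont.continuousAt
  have hprod := ((Real.hasDerivAt_exp t).smul (hint.const_sub (hU.resolvent x))).hasDerivWithinAt
    (s := Ici t)
  refine (hprod.congr (fun s hs => hU.apply_resolvent_eq x (ht.trans hs))
    (hU.apply_resolvent_eq x ht)).congr_deriv ?_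
  rw [hU.apply_resolvent_eq x ht, dampedOrbit, smul_neg, smul_smul, ← Real.exp_add, add_neg_cancel,
    Real.exp_zero, one_smul, neg_add_eq_sub]

theorem resolvent_injective (hU : IsContractionSemigroup U) :
    Function.Injective hU.resolvent := by
  refine (injective_iff_map_eq_zero _).2 fun x hx => ?_
  have hderiv := hU.hasDerivWithinAt_apply_resolvent x le_rfl
  simp only [hx, map_zero, zero_sub] at hderiv
  simpa [hU.isC0Semigroup.1] using
    (uniqueDiffOn_Ici (0 : ℝ) 0 self_mem_Ici).eq_deriv _ hderiv (hasDerivWithinAt_const _ _ _)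

theorem apply_eq_exp_smul_of_two_smul_resolvent_eq (hU : IsContractionSemigroup U) {w : G}
    (hw : (2 : ℂ) • hU.resolvent w = w) (t : ℝ≥0) : U t w = (Real.exp (-t) : ℂ) • w := by
  have hderiv {s : ℝ} (hs : 0 ≤ s) :
      HasDerivWithinAt (fun t : ℝ => U t.toNNReal w) (-U s.toNNReal w) (Ici s) s := by
    have h := (hU.hasDerivWithinAt_apply_resolvent w hs).const_smul (2 : ℂ)
    simp only [Pi.smul_def, smul_sub, ← map_smul, hw] at h
    rwa [map_smul, two_smul, sub_add_cancel_left] at h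
  have hconst := constant_of_has_deriv_right_zero
    (f := fun t : ℝ => Real.exp t • U t.toNNReal w) (a := 0) (b := t)
    (Real.continuous_exp.smul (hU.isC0Semigroup.continuous_toNNReal w)).continuousOn
    (fun s hs => ((Real.hasDerivAt_exp s).hasDerivWithinAt.smul (hderiv hs.1)).congr_deriv
      (by simp)) t ⟨t.2, le_rfl⟩
  simp only [Real.toNNReal_coe, Real.toNNReal_zero, hU.isC0Semigroup.1, one_apply_eq_self,
    Real.exp_zero, one_smul] at hconst
  rw [Complex.coe_smul, Real.exp_neg, eq_inv_smul_iff₀ (Real.exp_ne_zero _), hconst]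

/-- The operator `½ (1 - C* C)`, where `C = 1 - 2 R` is the cogenerator of the semigroup and `R`
its resolvent. It measures the failure of the semigroup to be isometric. -/
def defect (hU : IsContractionSemigroup U) : G →L[ℂ] G :=
  hU.resolvent + adjoint hU.resolvent - (2 : ℂ) • (adjoint hU.resolvent * hU.resolvent)

theorem isSelfAdjoint_defect (hU : IsContractionSemigroup U) : IsSelfAdjoint hU.defect := by
  rw [defect, ← star_eq_adjoint]
  exact (IsSelfAdjoint.add_star_self _).sub
    ((IsSelfAdjoint.ofNat 2).smul (IsSelfAdjoint.star_mul_self _))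

theorem commute_defect (hU : IsContractionSemigroup U) {T : G →L[ℂ] G}
    (hT : ∀ t, Commute T (U t)) (hT' : ∀ t, Commute T (adjoint (U t))) :
    Commute T hU.defect := by
  have hR := hU.commute_resolvent hT
  have hR' : Commute T (adjoint hU.resolvent) :=
    hU.resolvent_adjoint ▸ hU.adjoint.commute_resolvent hT'
  exact (hR.add_right hR').sub_right ((hR'.mul_right hR).smul_right _)

theorem inner_defect_apply (hU : IsContractionSemigroup U) (x y : G) :
    ⟪hU.defect x, y⟫_ℂ = ⟪hU.resolvent x, y⟫_ℂ + ⟪x, hU.resolvent y⟫_ℂ -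
      2 * ⟪hU.resolvent x, hU.resolvent y⟫_ℂ := by
  simp only [defect, sub_apply, add_apply, smul_apply, mul_apply_eq_comp, inner_sub_left,
    inner_add_left, inner_smul_left, adjoint_inner_left, map_ofNat]

theorem hasDerivWithinAt_inner_apply_resolvent (hU : IsContractionSemigroup U) (x y : G) {t : ℝ}
    (ht : 0 ≤ t) :
    HasDerivWithinAt
      (fun t : ℝ => ⟪U t.toNNReal (hU.resolvent x), U t.toNNReal (hU.resolvent y)⟫_ℂ)
      (-⟪hU.defect (U t.toNNReal x), U t.toNNReal y⟫_ℂ) (Ici t) t := by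
  have hcomm (z : G) : U t.toNNReal (hU.resolvent z) = hU.resolvent (U t.toNNReal z) :=
    DFunLike.congr_fun (hU.commute_resolvent (hU.isC0Semigroup.commute t.toNNReal)).eq z
  refine ((hU.hasDerivWithinAt_apply_resolvent x ht).inner ℂ
    (hU.hasDerivWithinAt_apply_resolvent y ht)).congr_deriv ?_
  rw [hcomm, hcomm, inner_defect_apply, inner_sub_left, inner_sub_right]
  ring

theorem norm_apply_resolvent_of_defect_eq_zero (hU : IsContractionSemigroup U) {x : G}
    (hx : ∀ t, hU.defect (U t x) = 0) (t : ℝ≥0) : ‖U t (hU.resolvent x)‖ = ‖hU.resolvent x‖ := by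
  have hcont := hU.isC0Semigroup.continuous_toNNReal (hU.resolvent x)
  have hconst := constant_of_has_deriv_right_zero (a := 0) (b := t)
    (hcont.inner (𝕜 := ℂ) hcont).continuousOn
    (fun s hs => (hU.hasDerivWithinAt_inner_apply_resolvent x x hs.1).congr_deriv
      (by rw [hx, inner_zero_left, neg_zero])) t ⟨t.2, le_rfl⟩
  simp only [Real.toNNReal_coe, Real.toNNReal_zero, hU.isC0Semigroup.1, one_apply_eq_self] at hconst
  simp only [norm_eq_sqrt_re_inner (𝕜 := ℂ), hconst]

end IsContractionSemigroup

end ContractionSemigroup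

section IsometrySemigroup

variable {G : Type} [NormedAddCommGroup G] [InnerProductSpace ℂ G]

theorem IsIsometrySemigroup.isContractionSemigroup {V : ℝ≥0 → G →L[ℂ] G}
    (hV : IsIsometrySemigroup V) : IsContractionSemigroup V :=
  ⟨hV.1, fun t => (V t).opNorm_le_bound zero_le_one fun x => by rw [hV.2, one_mul]⟩

variable [CompleteSpace G]

/-- The vectors on which every `Vₜ Vₜ*` acts as the identity; for a semigroup of isometries it is
the largest subspace reducing `V` to a unitary semigroup. -/
def unitaryPart (V : ℝ≥0 → G →L[ℂ] G) : Submodule ℂ G :=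
  ⨅ t, (V t ∘L adjoint (V t)).toLinearMap.eqLocus LinearMap.id

theorem mem_unitaryPart {V : ℝ≥0 → G →L[ℂ] G} {x : G} :
    x ∈ unitaryPart V ↔ ∀ t, V t (adjoint (V t) x) = x := by
  simp [unitaryPart, Submodule.mem_iInf]

theorem isClosed_unitaryPart (V : ℝ≥0 → G →L[ℂ] G) : IsClosed (unitaryPart V : Set G) := by
  simp only [unitaryPart, Submodule.coe_iInf]
  exact isClosed_iInter fun t => isClosed_eq (V t ∘L adjoint (V t)).continuous continuous_id

namespace IsIsometrySemigroup

variable {V : ℝ≥0 → G →L[ℂ] G}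

theorem adjoint_apply_apply (hV : IsIsometrySemigroup V) (t : ℝ≥0) (x : G) :
    adjoint (V t) (V t x) = x :=
  adjoint_apply_apply_of_norm_eq (hV.isContractionSemigroup.norm_le_one t) (hV.2 t x)

theorem inner_apply_apply (hV : IsIsometrySemigroup V) (t : ℝ≥0) (x y : G) :
    ⟪V t x, V t y⟫_ℂ = ⟪x, y⟫_ℂ := by
  rw [← adjoint_inner_left, hV.adjoint_apply_apply]

theorem reducedBy_unitaryPart (hV : IsIsometrySemigroup V) : ReducedBy V (unitaryPart V) := by
  simp only [ReducedBy, mem_unitaryPart]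
  have hadj := hV.isContractionSemigroup.adjoint.isC0Semigroup
  refine ⟨fun s x hx t => ?_, fun s x hx t => ?_⟩
  · rcases le_total t s with hts | hst
    · obtain ⟨r, rfl⟩ := exists_add_of_le hts
      rw [hV.1.add_apply, hV.adjoint_apply_apply]
    · obtain ⟨r, rfl⟩ := exists_add_of_le hst
      rw [add_comm s r, hadj.add_apply, hV.adjoint_apply_apply, add_comm r s, hV.1.add_apply, hx]
  · calc V t (adjoint (V t) (adjoint (V s) x))
        = adjoint (V s) (V s (V t (adjoint (V t) (adjoint (V s) x)))) :=
          (hV.adjoint_apply_apply s _).symm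
      _ = adjoint (V s) (V (s + t) (adjoint (V (t + s)) x)) := by
          rw [hV.1.add_apply, hadj.add_apply]
      _ = adjoint (V s) x := by rw [add_comm t s, hx]

theorem unitaryPart_eq_bot (hV : IsIsometrySemigroup V) (hcnu : IsCnu V) : unitaryPart V = ⊥ :=
  have hred := hV.reducedBy_unitaryPart
  hcnu _ (isClosed_unitaryPart V) le_top hred fun t => ⟨hred.1 t, fun x _ => hV.2 t x,
    fun y hy => ⟨_, hred.2 t y hy, mem_unitaryPart.1 hy t⟩⟩

theorem defect_eq_zero (hV : IsIsometrySemigroup V) : hV.isContractionSemigroup.defect = 0 := by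
  ext x
  refine ext_inner_right ℂ fun y => ?_
  have hderiv :=
    hV.isContractionSemigroup.hasDerivWithinAt_inner_apply_resolvent x y (le_refl (0 : ℝ))
  simp only [hV.inner_apply_apply] at hderiv
  simpa [hV.1.1] using
    (uniqueDiffOn_Ici (0 : ℝ) 0 Set.self_mem_Ici).eq_deriv _ hderiv (hasDerivWithinAt_const _ _ _)

/-- The defect of the adjoint semigroup, i.e. `½ (1 - C C*)` for the cogenerator `C` of the
isometric semigroup; its range consists of joint eigenvectors of the adjoints. -/
def defectOperator (hV : IsIsometrySemigroup V) : G →L[ℂ] G :=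
  hV.isContractionSemigroup.adjoint.defect

theorem commute_defectOperator (hV : IsIsometrySemigroup V) {T : G →L[ℂ] G}
    (hT : ∀ t, Commute T (V t)) (hT' : ∀ t, Commute T (adjoint (V t))) :
    Commute T hV.defectOperator :=
  hV.isContractionSemigroup.adjoint.commute_defect hT' fun t => by
    rw [adjoint_adjoint]; exact hT t

theorem inner_defectOperator_left (hV : IsIsometrySemigroup V) (x y : G) :
    ⟪hV.defectOperator x, y⟫_ℂ = ⟪x, hV.defectOperator y⟫_ℂ :=
  hV.isContractionSemigroup.adjoint.isSelfAdjoint_defect.isSymmetric x y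

theorem adjoint_apply_defectOperator (hV : IsIsometrySemigroup V) (t : ℝ≥0) (x : G) :
    adjoint (V t) (hV.defectOperator x) = (Real.exp (-t) : ℂ) • hV.defectOperator x := by
  have hU := hV.isContractionSemigroup
  refine hU.adjoint.apply_eq_exp_smul_of_two_smul_resolvent_eq ?_ t
  set R := hU.resolvent
  have hR : R + adjoint R = (2 : ℂ) • (adjoint R * R) := sub_eq_zero.1 hV.defect_eq_zero
  have hQ : hV.defectOperator = adjoint R + R - (2 : ℂ) • (R * adjoint R) := by
    rw [defectOperator, IsContractionSemigroup.defect, hU.resolvent_adjoint, adjoint_adjoint]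
  have hRQ : (2 : ℂ) • (adjoint R * hV.defectOperator) = hV.defectOperator := by
    calc (2 : ℂ) • (adjoint R * hV.defectOperator)
        = (2 : ℂ) • (adjoint R * adjoint R) + (2 : ℂ) • (adjoint R * R)
            - (2 : ℂ) • ((2 : ℂ) • (adjoint R * R) * adjoint R) := by
          rw [hQ, mul_sub, mul_add, mul_smul_comm, smul_mul_assoc, mul_assoc, smul_sub, smul_add]
      _ = hV.defectOperator := by
          rw [← hR, hQ, add_mul, smul_add]
          abel
  rw [hU.resolvent_adjoint]
  exact DFunLike.congr_fun hRQ x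

theorem eq_zero_of_defectOperator_adjoint_apply_eq_zero (hV : IsIsometrySemigroup V)
    (hcnu : IsCnu V) {x : G} (hx : ∀ t, hV.defectOperator (adjoint (V t) x) = 0) : x = 0 := by
  have hU := hV.isContractionSemigroup.adjoint
  have hmem : hU.resolvent x ∈ unitaryPart V := mem_unitaryPart.2 fun t => by
    simpa only [adjoint_adjoint] using adjoint_apply_apply_of_norm_eq (hU.norm_le_one t)
      (hU.norm_apply_resolvent_of_defect_eq_zero hx t)
  rw [hV.unitaryPart_eq_bot hcnu, Submodule.mem_bot] at hmem
  exact hU.resolvent_injective (hmem.trans (map_zero _).symm)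

end IsIsometrySemigroup

end IsometrySemigroup

section BiexponentialSystem

open Filter Topology

theorem dist_add_eq_tsub_add_dist_tsub (s s' q : ℝ≥0) :
    dist (s' + q) s = ((q - s : ℝ≥0) : ℝ) + dist s' (s - q) := by
  simp only [NNReal.dist_eq, NNReal.coe_add]
  rcases le_total s q with h | h
  · rw [tsub_eq_zero_of_le h, NNReal.coe_sub h, NNReal.coe_zero, sub_zero, NNReal.abs_eq,
      abs_of_nonneg (by linarith [s'.2, NNReal.coe_le_coe.2 h])]
    ring
  · rw [tsub_eq_zero_of_le h, NNReal.coe_sub h, NNReal.coe_zero, zero_add, sub_sub_eq_add_sub]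

variable {G : Type} [NormedAddCommGroup G] [InnerProductSpace ℂ G]

theorem isCnu_of_tendsto_adjoint [CompleteSpace G] {ι : Type*} {V : ℝ≥0 → G →L[ℂ] G} {a : ι → G}
    (ha : IsTotalFamily ℂ a)
    (hlim : ∀ i, Tendsto (fun t => adjoint (V t) (a i)) atTop (𝓝 0)) : IsCnu V := by
  refine fun L _ _ _ hL => (Submodule.eq_bot_iff L).2 fun x hx => ha x fun i => ?_
  have hbound (t : ℝ≥0) : ‖⟪a i, x⟫_ℂ‖ ≤ ‖adjoint (V t) (a i)‖ * ‖x‖ := by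
    obtain ⟨y, hy, rfl⟩ := (hL t).2.2 x hx
    rw [(hL t).2.1 y hy, ← adjoint_inner_left]
    exact norm_inner_le_norm _ _
  have hzero : Tendsto (fun t => ‖adjoint (V t) (a i)‖ * ‖x‖) atTop (𝓝 0) := by
    simpa using (hlim i).norm.mul_const ‖x‖
  exact norm_le_zero_iff.1 (ge_of_tendsto' hzero hbound)

variable {W : Type*} [NormedAddCommGroup W] [InnerProductSpace ℂ W]

/-- A total family `a s t w` in a Hilbert space on which `V₁` and `V₂` act by translating the
parameters `s` and `t`, with the Gram matrix of the functions
`(p₁, p₂) ↦ 2 exp (s - p₁) exp (t - p₂) • w` on `[s, ∞) × [t, ∞)`. Such a family determines the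
pair `(V₁, V₂)` up to unitary equivalence. -/
structure IsBiexponentialSystem (V₁ V₂ : ℝ≥0 → G →L[ℂ] G) (a : ℝ≥0 → ℝ≥0 → W → G) : Prop where
  map_fst : ∀ r s t w, V₁ r (a s t w) = a (s + r) t w
  map_snd : ∀ r s t w, V₂ r (a s t w) = a s (t + r) w
  inner_eq : ∀ s t w s' t' w', ⟪a s t w, a s' t' w'⟫_ℂ =
    (Real.exp (-dist s s') : ℂ) * (Real.exp (-dist t t') : ℂ) * ⟪w, w'⟫_ℂ
  isTotalFamily : IsTotalFamily ℂ fun i : ℝ≥0 × ℝ≥0 × W => a i.1 i.2.1 i.2.2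

namespace IsBiexponentialSystem

variable {V₁ V₂ : ℝ≥0 → G →L[ℂ] G} {a : ℝ≥0 → ℝ≥0 → W → G}

theorem swap (h : IsBiexponentialSystem V₁ V₂ a) :
    IsBiexponentialSystem V₂ V₁ fun s t => a t s where
  map_fst r s t := h.map_snd r t s
  map_snd r s t := h.map_fst r t s
  inner_eq s t w s' t' w' := by rw [h.inner_eq, mul_comm (Real.exp _ : ℂ)]
  isTotalFamily x hx := h.isTotalFamily x fun i => hx (i.2.1, i.1, i.2.2)

theorem map {K : Type} [NormedAddCommGroup K] [InnerProductSpace ℂ K]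
    {U₁ U₂ : ℝ≥0 → K →L[ℂ] K} (h : IsBiexponentialSystem V₁ V₂ a) (e : G ≃ₗᵢ[ℂ] K)
    (he₁ : ∀ t x, e (V₁ t x) = U₁ t (e x)) (he₂ : ∀ t x, e (V₂ t x) = U₂ t (e x)) :
    IsBiexponentialSystem U₁ U₂ fun s t w => e (a s t w) where
  map_fst r s t w := by rw [← he₁, h.map_fst]
  map_snd r s t w := by rw [← he₂, h.map_snd]
  inner_eq s t w s' t' w' := by rw [e.inner_map_map, h.inner_eq]
  isTotalFamily := h.isTotalFamily.map e

variable [CompleteSpace G]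

theorem adjoint_fst (h : IsBiexponentialSystem V₁ V₂ a) (q s t : ℝ≥0) (w : W) :
    adjoint (V₁ q) (a s t w) = (Real.exp (-(q - s : ℝ≥0)) : ℂ) • a (s - q) t w := by
  refine sub_eq_zero.1 (h.isTotalFamily _ fun i => ?_)
  rw [inner_sub_right, adjoint_inner_right, h.map_fst, inner_smul_right, h.inner_eq, h.inner_eq,
    dist_add_eq_tsub_add_dist_tsub, neg_add, Real.exp_add, Complex.ofReal_mul]
  ring

theorem isIsometrySemigroup_fst (h : IsBiexponentialSystem V₁ V₂ a) (hV₁ : IsC0Semigroup V₁) :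
    IsIsometrySemigroup V₁ := by
  refine ⟨hV₁, fun r => (norm_map_iff_adjoint_comp_self (V₁ r)).2 ?_⟩
  refine h.isTotalFamily.clm_ext fun i => ?_
  rw [comp_apply, h.map_fst, h.adjoint_fst, add_tsub_cancel_right,
    tsub_eq_zero_of_le (le_add_self : r ≤ i.1 + r)]
  simp

theorem isCnu_fst (h : IsBiexponentialSystem V₁ V₂ a) : IsCnu V₁ := by
  refine isCnu_of_tendsto_adjoint h.isTotalFamily fun i => ?_
  have hexp : Tendsto (fun q : ℝ≥0 => Real.exp (-(q - i.1 : ℝ))) atTop (𝓝 0) :=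
    Real.tendsto_exp_neg_atTop_nhds_zero.comp
      (tendsto_atTop_add_const_right _ _ (NNReal.tendsto_coe_atTop.2 tendsto_id))
  have hlim : Tendsto (fun q : ℝ≥0 => (Real.exp (-(q - i.1 : ℝ)) : ℂ) • a 0 i.2.1 i.2.2) atTop
      (𝓝 0) := by
    simpa using ((Complex.continuous_ofReal.tendsto 0).comp hexp).smul_const (a 0 i.2.1 i.2.2)
  refine hlim.congr' ((eventually_ge_atTop i.1).mono fun q hq => ?_)
  beta_reduce
  rw [h.adjoint_fst, tsub_eq_zero_of_le hq, NNReal.coe_sub hq]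

theorem sgDoublyCommute (h : IsBiexponentialSystem V₁ V₂ a) : SgDoublyCommute V₁ V₂ := by
  refine ⟨fun r q => h.isTotalFamily.clm_ext fun i => ?_,
    fun r q => h.isTotalFamily.clm_ext fun i => ?_⟩
  · simp only [comp_apply, h.map_fst, h.map_snd]
  · simp only [comp_apply, h.map_fst, h.swap.adjoint_fst, map_smul]

theorem exists_linearIsometryEquiv {K : Type} [NormedAddCommGroup K] [InnerProductSpace ℂ K]
    [CompleteSpace K] {U₁ U₂ : ℝ≥0 → K →L[ℂ] K} {b : ℝ≥0 → ℝ≥0 → W → K}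
    (h : IsBiexponentialSystem V₁ V₂ a) (h' : IsBiexponentialSystem U₁ U₂ b) :
    ∃ Z : G ≃ₗᵢ[ℂ] K, (∀ t x, Z (V₁ t x) = U₁ t (Z x)) ∧ ∀ t x, Z (V₂ t x) = U₂ t (Z x) := by
  obtain ⟨Z, hZ⟩ := h.isTotalFamily.exists_linearIsometryEquiv h'.isTotalFamily fun i j => by
    rw [h.inner_eq, h'.inner_eq]
  have hfst (t : ℝ≥0) : (Z : G →L[ℂ] K) ∘L V₁ t = U₁ t ∘L (Z : G →L[ℂ] K) :=
    h.isTotalFamily.clm_ext fun i => by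
      simp [h.map_fst, h'.map_fst, hZ (i.1, i.2), hZ (i.1 + t, i.2)]
  have hsnd (t : ℝ≥0) : (Z : G →L[ℂ] K) ∘L V₂ t = U₂ t ∘L (Z : G →L[ℂ] K) :=
    h.isTotalFamily.clm_ext fun i => by
      simp [h.map_snd, h'.map_snd, hZ (i.1, i.2), hZ (i.1, i.2.1 + t, i.2.2)]
  exact ⟨Z, fun t => DFunLike.congr_fun (hfst t), fun t => DFunLike.congr_fun (hsnd t)⟩

end IsBiexponentialSystem

end BiexponentialSystem

section Orthants

open Set Filter Topology

theorem generateFrom_range_Ici_real_prod :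
    MeasurableSpace.generateFrom (range Ici : Set (Set (ℝ × ℝ))) = Prod.instMeasurableSpace := by
  have hgen : MeasurableSpace.generateFrom (range (Ici : ℝ → Set ℝ)) = Real.measurableSpace := by
    rw [← borel_eq_generateFrom_Ici, BorelSpace.measurable_eq (α := ℝ)]
  have hspan : IsCountablySpanning (range (Ici : ℝ → Set ℝ)) :=
    ⟨fun n : ℕ => Ici (-(n : ℝ)), fun n => ⟨_, rfl⟩, iUnion_eq_univ_iff.2 fun x =>
      (exists_nat_ge (-x)).imp fun n hn => neg_le.1 hn⟩
  have hrange : image2 (· ×ˢ ·) (range (Ici : ℝ → Set ℝ)) (range (Ici : ℝ → Set ℝ)) =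
      range Ici := by
    rw [image2_range]
    simp only [Ici_prod_Ici]
  rw [← hrange, generateFrom_eq_prod hgen hgen hspan hspan]

variable {E : Type*} [NormedAddCommGroup E] [NormedSpace ℝ E] [CompleteSpace E]

theorem ae_eq_zero_of_forall_setIntegral_Ici_eq_zero {μ : Measure (ℝ × ℝ)} {f : ℝ × ℝ → E}
    (hf : Integrable f μ) (h : ∀ v, ∫ p in Ici v, f p ∂μ = 0) : f =ᵐ[μ] 0 := by
  have hlim : Tendsto (fun r : ℝ => (r, r)) atBot atBot := by
    rw [← prod_atBot_atBot_eq]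
    exact tendsto_id.prodMk tendsto_id
  have huniv : ∫ p, f p ∂μ = 0 :=
    tendsto_nhds_unique ((aecover_Ici hlim).integral_tendsto_of_countably_generated hf)
      (by simp only [h, tendsto_const_nhds])
  refine hf.ae_eq_of_withDensityᵥ_eq (integrable_zero _ _ _) ?_
  refine VectorMeasure.ext_of_generateFrom (range Ici) ?_ generateFrom_range_Ici_real_prod.symm
    ?_ ?_
  · rintro _ ⟨v, rfl⟩
    rw [withDensityᵥ_apply hf measurableSet_Ici, h]
    simp
  · rintro _ ⟨v, rfl⟩ _ ⟨u, rfl⟩ -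
    exact ⟨v ⊔ u, Ici_inter_Ici.symm⟩
  · rw [withDensityᵥ_apply hf .univ, setIntegral_univ, huniv]
    simp

end Orthants

section ExpKernel

open Set

/-- The function `√2 exp (s - r)` of `r ∈ [s, ∞)`, extended by zero. It is the translate by `s` of
the unit vector of `L²(ℝ₊)` that is an eigenvector of all backward shifts. -/
def expKernel (s : ℝ) : ℝ → ℝ :=
  (Ici s).indicator fun r => √2 * Real.exp (s - r)

theorem expKernel_sub (s t r : ℝ) : expKernel s (r - t) = expKernel (s + t) r := by
  simp only [expKernel, indicator_apply, mem_Ici, le_sub_iff_add_le, sub_sub_eq_add_sub]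

theorem expKernel_zero_mul_exp {s r : ℝ} (hs : 0 ≤ s) (hr : s ≤ r) :
    expKernel 0 r = Real.exp (-s) * expKernel s r := by
  rw [expKernel, expKernel, indicator_of_mem (mem_Ici.2 (hs.trans hr)),
    indicator_of_mem (mem_Ici.2 hr), mul_left_comm, ← Real.exp_add, zero_sub,
    neg_add_eq_sub, sub_sub_cancel_left]

theorem expKernel_pos {s r : ℝ} (hr : s ≤ r) : 0 < expKernel s r := by
  rw [expKernel, indicator_of_mem (mem_Ici.2 hr)]
  positivity

theorem expKernel_mul_expKernel (s s' : ℝ) : (fun r => expKernel s r * expKernel s' r) =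
    (Ici (max s s')).indicator fun r => 2 * Real.exp (s + s') * Real.exp (-2 * r) := by
  have hexp (r : ℝ) : √2 * Real.exp (s - r) * (√2 * Real.exp (s' - r)) =
      2 * Real.exp (s + s') * Real.exp (-2 * r) := by
    rw [mul_mul_mul_comm, Real.mul_self_sqrt zero_le_two, mul_assoc, ← Real.exp_add,
      ← Real.exp_add]
    ring_nf
  funext r
  simp only [expKernel, ← inter_indicator_mul, Ici_inter_Ici, hexp]

theorem measurable_expKernel (s : ℝ) : Measurable (expKernel s) :=
  (by fun_prop : Measurable fun r => √2 * Real.exp (s - r)).indicator measurableSet_Ici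

theorem integrable_expKernel_mul (s s' : ℝ) :
    Integrable fun r => expKernel s r * expKernel s' r := by
  rw [expKernel_mul_expKernel, integrable_indicator_iff measurableSet_Ici,
    integrableOn_Ici_iff_integrableOn_Ioi]
  exact (integrableOn_exp_mul_Ioi (by norm_num) _).const_mul _

theorem integral_expKernel_mul (s s' : ℝ) :
    ∫ r, expKernel s r * expKernel s' r = Real.exp (-dist s s') := by
  have hdist : -dist s s' = s + s' + -2 * max s s' := by
    rw [Real.dist_eq, ← max_sub_min_eq_abs', ← max_add_min s s']
    ring
  rw [expKernel_mul_expKernel, integral_indicator measurableSet_Ici, integral_Ici_eq_integral_Ioi,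
    integral_const_mul, integral_exp_mul_Ioi (by norm_num), hdist, Real.exp_add (s + s')]
  ring

/-- The tensor product of two exponential kernels: `2 exp (v₁ - p₁) exp (v₂ - p₂)` on the quadrant
`Ici v`. -/
def biexpKernel (v p : ℝ × ℝ) : ℝ :=
  expKernel v.1 p.1 * expKernel v.2 p.2

theorem biexpKernel_of_notMem {v p : ℝ × ℝ} (hp : p ∉ Ici v) : biexpKernel v p = 0 := by
  rw [← Ici_prod_Ici, mem_prod, not_and_or] at hp
  rcases hp with hp | hp <;> simp [biexpKernel, expKernel, hp]

theorem biexpKernel_zero_pos {p : ℝ × ℝ} (hp : 0 ≤ p) : 0 < biexpKernel 0 p :=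
  mul_pos (expKernel_pos hp.1) (expKernel_pos hp.2)

theorem biexpKernel_sub (v u p : ℝ × ℝ) : biexpKernel v (p - u) = biexpKernel (v + u) p := by
  simp only [biexpKernel, Prod.fst_sub, Prod.snd_sub, Prod.fst_add, Prod.snd_add, expKernel_sub]

theorem indicator_biexpKernel_zero {v : ℝ × ℝ} (hv : 0 ≤ v) (p : ℝ × ℝ) :
    (Ici v).indicator (biexpKernel 0) p = Real.exp (-(v.1 + v.2)) * biexpKernel v p := by
  by_cases hp : p ∈ Ici v
  · rw [indicator_of_mem hp, biexpKernel, Prod.fst_zero, Prod.snd_zero,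
      expKernel_zero_mul_exp hv.1 hp.1, expKernel_zero_mul_exp hv.2 hp.2, mul_mul_mul_comm,
      ← Real.exp_add, neg_add, biexpKernel]
  · rw [indicator_of_notMem hp, biexpKernel_of_notMem hp, mul_zero]

theorem measurable_biexpKernel (v : ℝ × ℝ) : Measurable (biexpKernel v) :=
  ((measurable_expKernel _).comp measurable_fst).mul ((measurable_expKernel _).comp measurable_snd)

theorem biexpKernel_mul_biexpKernel (v u p : ℝ × ℝ) : biexpKernel v p * biexpKernel u p =
    expKernel v.1 p.1 * expKernel u.1 p.1 * (expKernel v.2 p.2 * expKernel u.2 p.2) :=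
  mul_mul_mul_comm _ _ _ _

theorem memLp_biexpKernel (v : ℝ × ℝ) : MemLp (biexpKernel v) 2 := by
  refine (memLp_two_iff_integrable_sq (measurable_biexpKernel v).aestronglyMeasurable).2 ?_
  simp only [sq, biexpKernel_mul_biexpKernel]
  exact (integrable_expKernel_mul v.1 v.1).mul_prod (integrable_expKernel_mul v.2 v.2)

theorem setIntegral_biexpKernel_mul {v : ℝ × ℝ} (hv : 0 ≤ v) (u : ℝ × ℝ) :
    ∫ p in Ici 0, biexpKernel v p * biexpKernel u p =
      Real.exp (-dist v.1 u.1) * Real.exp (-dist v.2 u.2) := by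
  have hsupp : ∀ p ∉ Ici (0 : ℝ × ℝ), biexpKernel v p * biexpKernel u p = 0 := fun p hp => by
    rw [biexpKernel_of_notMem fun hvp => hp (hv.trans hvp), zero_mul]
  rw [setIntegral_eq_integral_of_forall_compl_eq_zero hsupp, Measure.volume_eq_prod]
  simp only [biexpKernel_mul_biexpKernel]
  rw [integral_prod_mul (fun r => expKernel v.1 r * expKernel u.1 r)
    (fun r => expKernel v.2 r * expKernel u.2 r), integral_expKernel_mul, integral_expKernel_mul]

end ExpKernel

section ExtendByZero

variable {α E : Type*} [MeasurableSpace α] {p : ℝ≥0∞} {A : Set α} [NormedAddCommGroup E]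

theorem memLp_indicator_coeFn {μ : Measure α} (hA : MeasurableSet A)
    (f : Lp E p (μ.restrict A)) : MemLp (A.indicator f) p μ :=
  (memLp_indicator_iff_restrict hA).2 (Lp.memLp f)

/-- Extension by zero of functions on a measurable set, as a linear isometry of `Lp` spaces. -/
def extendByZeroₗᵢ [Fact (1 ≤ p)] (𝕜 : Type*) [NormedRing 𝕜] [Module 𝕜 E] [IsBoundedSMul 𝕜 E]
    (μ : Measure α) (hA : MeasurableSet A) : Lp E p (μ.restrict A) →ₗᵢ[𝕜] Lp E p μ where
  toFun f := (memLp_indicator_coeFn hA f).toLp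
  map_add' f g := by
    rw [← MemLp.toLp_add]
    refine MemLp.toLp_congr _ _ ?_
    rw [← Set.indicator_add']
    exact (ae_eq_restrict_iff_indicator_ae_eq hA).1 (Lp.coeFn_add f g)
  map_smul' c f := by
    rw [RingHom.id_apply, ← MemLp.toLp_const_smul]
    refine MemLp.toLp_congr _ _ (.trans ?_ (.of_eq (Set.indicator_const_smul A c f)))
    exact (ae_eq_restrict_iff_indicator_ae_eq hA).1 (Lp.coeFn_smul c f)
  norm_map' f := by
    change ‖(memLp_indicator_coeFn hA f).toLp‖ = ‖f‖
    rw [Lp.norm_toLp, eLpNorm_indicator_eq_eLpNorm_restrict hA, Lp.norm_def]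

theorem coeFn_extendByZeroₗᵢ [Fact (1 ≤ p)] {𝕜 : Type*} [NormedRing 𝕜] [Module 𝕜 E]
    [IsBoundedSMul 𝕜 E] (μ : Measure α) (hA : MeasurableSet A) (f : Lp E p (μ.restrict A)) :
    extendByZeroₗᵢ 𝕜 μ hA f =ᵐ[μ] A.indicator f :=
  (memLp_indicator_coeFn hA f).coeFn_toLp

end ExtendByZero

section QuadrantShift

open Set

theorem nuQ_eq_restrict_Ici : nuQ = volume.restrict (Ici 0) := rfl

theorem ae_nuQ_nonneg : ∀ᵐ p ∂nuQ, 0 ≤ p :=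
  ae_restrict_mem (measurableSet_Ici : MeasurableSet (Ici (0 : ℝ × ℝ)))

theorem nuQ_restrict_Ici_sup_zero (v : ℝ × ℝ) :
    nuQ.restrict (Ici (v ⊔ 0)) = nuQ.restrict (Ici v) := by
  rw [nuQ_eq_restrict_Ici, Measure.restrict_restrict measurableSet_Ici,
    Measure.restrict_restrict measurableSet_Ici, Ici_inter_Ici, Ici_inter_Ici, sup_assoc, sup_idem]

theorem measurePreserving_sub_nuQ {u : ℝ × ℝ} (hu : 0 ≤ u) :
    MeasurePreserving (fun p => p - u) (nuQ.restrict (Ici u)) nuQ := by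
  have hpre : (fun p => p - u) ⁻¹' Ici 0 = Ici u := by ext p; simp
  rw [nuQ_eq_restrict_Ici, Measure.restrict_restrict measurableSet_Ici, Ici_inter_Ici,
    sup_eq_left.2 hu, ← hpre]
  exact (measurePreserving_sub_right volume u).restrict_preimage measurableSet_Ici

variable {F : Type*} [NormedAddCommGroup F] [InnerProductSpace ℂ F]

/-- The operator `𝒮_{1,s} 𝒮_{2,t}` of translation by `(s, t)` on `L²(ℝ₊², F)`. -/
def quadrantShift (s t : ℝ≥0) : Lp F 2 nuQ →ₗᵢ[ℂ] Lp F 2 nuQ :=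
  (extendByZeroₗᵢ ℂ nuQ measurableSet_Ici).comp
    (Lp.compMeasurePreservingₗᵢ ℂ _ (measurePreserving_sub_nuQ (u := (↑s, ↑t)) ⟨s.2, t.2⟩))

theorem coeFn_quadrantShift (s t : ℝ≥0) (f : Lp F 2 nuQ) :
    quadrantShift s t f =ᵐ[nuQ]
      (Ici ((s : ℝ), (t : ℝ))).indicator fun p => f (p - ((s : ℝ), (t : ℝ))) :=
  (coeFn_extendByZeroₗᵢ (𝕜 := ℂ) nuQ measurableSet_Ici _).trans
    ((ae_eq_restrict_iff_indicator_ae_eq measurableSet_Ici).1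
      (Lp.coeFn_compMeasurePreserving f
        (measurePreserving_sub_nuQ (u := ((s : ℝ), (t : ℝ))) ⟨s.2, t.2⟩)))

theorem eq_quadrantShift_fst_iff {t : ℝ≥0} {f g : Lp F 2 nuQ} :
    g = quadrantShift t 0 f ↔
      g =ᵐ[nuQ] fun p => if (t : ℝ) ≤ p.1 then f (p.1 - t, p.2) else 0 := by
  have hshift : quadrantShift t 0 f =ᵐ[nuQ]
      fun p => if (t : ℝ) ≤ p.1 then f (p.1 - t, p.2) else 0 := by
    filter_upwards [coeFn_quadrantShift t 0 f, ae_nuQ_nonneg] with p hp hpos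
    simp [hp, indicator_apply, Prod.le_def, Prod.sub_def, show 0 ≤ p.2 from hpos.2]
  exact ⟨fun h => h ▸ hshift, fun h => Lp.ext (h.trans hshift.symm)⟩

theorem eq_quadrantShift_snd_iff {t : ℝ≥0} {f g : Lp F 2 nuQ} :
    g = quadrantShift 0 t f ↔
      g =ᵐ[nuQ] fun p => if (t : ℝ) ≤ p.2 then f (p.1, p.2 - t) else 0 := by
  have hshift : quadrantShift 0 t f =ᵐ[nuQ]
      fun p => if (t : ℝ) ≤ p.2 then f (p.1, p.2 - t) else 0 := by
    filter_upwards [coeFn_quadrantShift 0 t f, ae_nuQ_nonneg] with p hp hpos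
    simp [hp, indicator_apply, Prod.le_def, Prod.sub_def, show 0 ≤ p.1 from hpos.1]
  exact ⟨fun h => h ▸ hshift, fun h => Lp.ext (h.trans hshift.symm)⟩

theorem memLp_biexpKernel_smul (v : ℝ × ℝ) (w : F) :
    MemLp (fun p => biexpKernel v p • w) 2 nuQ :=
  ((ContinuousLinearMap.id ℝ ℝ).smulRight w).comp_memLp' ((memLp_biexpKernel v).restrict _)

/-- The function `biexpKernel (s, t) • w` as an element of `L²(ℝ₊², F)`. -/
def kernelVector (s t : ℝ≥0) (w : F) : Lp F 2 nuQ :=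
  (memLp_biexpKernel_smul (↑s, ↑t) w).toLp

theorem coeFn_kernelVector (s t : ℝ≥0) (w : F) :
    kernelVector s t w =ᵐ[nuQ] fun p => biexpKernel (↑s, ↑t) p • w :=
  MemLp.coeFn_toLp _

theorem quadrantShift_kernelVector (q r s t : ℝ≥0) (w : F) :
    quadrantShift q r (kernelVector s t w) = kernelVector (s + q) (t + r) w := by
  have hcomp := (ae_eq_restrict_iff_indicator_ae_eq measurableSet_Ici).1
    ((measurePreserving_sub_nuQ (u := (↑q, ↑r)) ⟨q.2, r.2⟩).quasiMeasurePreserving.ae_eq_comp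
      (coeFn_kernelVector s t w))
  refine Lp.ext (((coeFn_quadrantShift q r _).trans hcomp).trans
    (.trans (.of_eq ?_) (coeFn_kernelVector (s + q) (t + r) w).symm))
  have hle : ((q : ℝ), (r : ℝ)) ≤ (↑(s + q), ↑(t + r)) := ⟨by simp, by simp⟩
  funext p
  by_cases hp : p ∈ Ici ((q : ℝ), (r : ℝ))
  · simp [indicator_of_mem hp, biexpKernel_sub]
  · rw [indicator_of_notMem hp, biexpKernel_of_notMem fun h => hp (hle.trans h), zero_smul]

theorem integrable_biexpKernel_smul (v : ℝ × ℝ) (f : Lp F 2 nuQ) :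
    Integrable (fun p => biexpKernel v p • f p) nuQ :=
  memLp_one_iff_integrable.1 ((Lp.memLp f).smul (𝕜 := ℝ) ((memLp_biexpKernel v).restrict _))

theorem inner_kernelVector_left [CompleteSpace F] (s t : ℝ≥0) (w : F) (f : Lp F 2 nuQ) :
    ⟪kernelVector s t w, f⟫_ℂ = ⟪w, ∫ p, biexpKernel (↑s, ↑t) p • f p ∂nuQ⟫_ℂ := by
  rw [L2.inner_def, ← integral_inner (integrable_biexpKernel_smul _ f)]
  refine integral_congr_ae ((coeFn_kernelVector s t w).mono fun p hp => ?_)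
  beta_reduce
  rw [hp, inner_smul_left_eq_smul, inner_smul_right_eq_smul]

variable [CompleteSpace F]

theorem inner_kernelVector_kernelVector (s t : ℝ≥0) (w : F) (s' t' : ℝ≥0) (w' : F) :
    ⟪kernelVector s t w, kernelVector s' t' w'⟫_ℂ =
      (Real.exp (-dist s s') : ℂ) * (Real.exp (-dist t t') : ℂ) * ⟪w, w'⟫_ℂ := by
  have hsmul : (fun p => biexpKernel (↑s, ↑t) p • kernelVector s' t' w' p) =ᵐ[nuQ]
      fun p => (biexpKernel (↑s, ↑t) p * biexpKernel (↑s', ↑t') p) • w' :=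
    (coeFn_kernelVector s' t' w').mono fun p hp => by
      beta_reduce
      rw [hp, smul_smul]
  rw [inner_kernelVector_left, integral_congr_ae hsmul, integral_smul_const, nuQ_eq_restrict_Ici,
    setIntegral_biexpKernel_mul ⟨s.2, t.2⟩, inner_smul_right_eq_smul, Complex.real_smul,
    Complex.ofReal_mul]
  rfl

theorem isTotalFamily_kernelVector :
    IsTotalFamily ℂ fun i : ℝ≥0 × ℝ≥0 × F => kernelVector i.1 i.2.1 i.2.2 := by
  intro g hg
  have hker (v : ℝ × ℝ) (hv : 0 ≤ v) : ∫ p, biexpKernel v p • g p ∂nuQ = 0 :=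
    ext_inner_left ℂ fun w => by
      rw [inner_zero_right, ← hg (⟨v.1, hv.1⟩, ⟨v.2, hv.2⟩, w), inner_kernelVector_left]
      rfl
  have hIci (v : ℝ × ℝ) (hv : 0 ≤ v) : ∫ p in Ici v, biexpKernel 0 p • g p ∂nuQ = 0 := by
    have hind : (Ici v).indicator (fun p => biexpKernel 0 p • g p) =
        fun p => Real.exp (-(v.1 + v.2)) • biexpKernel v p • g p := by
      funext p
      rw [indicator_smul_apply_left, indicator_biexpKernel_zero hv, smul_smul]
    rw [← integral_indicator measurableSet_Ici, hind, integral_smul, hker v hv, smul_zero]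
  have hzero : (fun p => biexpKernel 0 p • g p) =ᵐ[nuQ] 0 := by
    refine ae_eq_zero_of_forall_setIntegral_Ici_eq_zero (integrable_biexpKernel_smul 0 g)
      fun v => ?_
    rw [← nuQ_restrict_Ici_sup_zero, hIci _ le_sup_right]
  refine Lp.eq_zero_iff_ae_eq_zero.2 ?_
  filter_upwards [hzero, ae_nuQ_nonneg] with p hp hpos
  exact (smul_eq_zero_iff_right (biexpKernel_zero_pos hpos).ne').1 hp

end QuadrantShift

section Bishift

theorem isBiexponentialSystem_kernelVector {F : Type} [NormedAddCommGroup F]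
    [InnerProductSpace ℂ F] [CompleteSpace F] :
    IsBiexponentialSystem (fun t => (quadrantShift t 0).toContinuousLinearMap)
      (fun t => (quadrantShift 0 t).toContinuousLinearMap) (kernelVector (F := F)) where
  map_fst r s t w := by simp [quadrantShift_kernelVector]
  map_snd r s t w := by simp [quadrantShift_kernelVector]
  inner_eq := inner_kernelVector_kernelVector
  isTotalFamily := isTotalFamily_kernelVector

variable {G : Type} [NormedAddCommGroup G] [InnerProductSpace ℂ G] [CompleteSpace G]
  {V₁ V₂ : ℝ≥0 → G →L[ℂ] G}

theorem isBishiftPair_iff_exists_intertwining : IsBishiftPair V₁ V₂ ↔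
    ∃ (F : Type) (_ : NormedAddCommGroup F) (_ : InnerProductSpace ℂ F) (_ : CompleteSpace F)
      (Z : G ≃ₗᵢ[ℂ] Lp F 2 nuQ), (∀ t x, Z (V₁ t x) = quadrantShift t 0 (Z x)) ∧
        ∀ t x, Z (V₂ t x) = quadrantShift 0 t (Z x) := by
  simp only [IsBishiftPair, eq_quadrantShift_fst_iff, eq_quadrantShift_snd_iff, forall_and]

theorem IsBiexponentialSystem.isBishiftPair {W : Type} [NormedAddCommGroup W]
    [InnerProductSpace ℂ W] [CompleteSpace W] {a : ℝ≥0 → ℝ≥0 → W → G}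
    (h : IsBiexponentialSystem V₁ V₂ a) : IsBishiftPair V₁ V₂ :=
  isBishiftPair_iff_exists_intertwining.2 ⟨W, _, _, inferInstance,
    h.exists_linearIsometryEquiv isBiexponentialSystem_kernelVector⟩

theorem IsBishiftPair.exists_isBiexponentialSystem (h : IsBishiftPair V₁ V₂) :
    ∃ (W : Type) (_ : NormedAddCommGroup W) (_ : InnerProductSpace ℂ W)
      (a : ℝ≥0 → ℝ≥0 → W → G), IsBiexponentialSystem V₁ V₂ a := by
  obtain ⟨F, _, _, _, Z, hfst, hsnd⟩ := isBishiftPair_iff_exists_intertwining.1 h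
  refine ⟨F, _, _, _, isBiexponentialSystem_kernelVector.map Z.symm (fun t f => ?_)
    fun t f => ?_⟩
  · simp [Z.symm_apply_eq, hfst]
  · simp [Z.symm_apply_eq, hsnd]

end Bishift

section JointEigenvectors

variable {G : Type} [NormedAddCommGroup G] [InnerProductSpace ℂ G] [CompleteSpace G]

/-- The common eigenvectors of all adjoints `(V t)*` for the eigenvalues `exp (-t)`. -/
def backwardEigenspace (V : ℝ≥0 → G →L[ℂ] G) : Submodule ℂ G :=
  ⨅ t, (adjoint (V t)).toLinearMap.eqLocus ((Real.exp (-t) : ℂ) • LinearMap.id)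

theorem mem_backwardEigenspace {V : ℝ≥0 → G →L[ℂ] G} {x : G} :
    x ∈ backwardEigenspace V ↔ ∀ t, adjoint (V t) x = (Real.exp (-t) : ℂ) • x := by
  simp [backwardEigenspace, Submodule.mem_iInf]

theorem isClosed_backwardEigenspace (V : ℝ≥0 → G →L[ℂ] G) :
    IsClosed (backwardEigenspace V : Set G) := by
  simp only [backwardEigenspace, Submodule.coe_iInf]
  exact isClosed_iInter fun t => isClosed_eq (adjoint (V t)).continuous (continuous_const_smul _)

theorem apply_mem_backwardEigenspace {V : ℝ≥0 → G →L[ℂ] G} {T : G →L[ℂ] G}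
    (hT : ∀ t, Commute T (adjoint (V t))) {x : G} (hx : x ∈ backwardEigenspace V) :
    T x ∈ backwardEigenspace V :=
  mem_backwardEigenspace.2 fun t => by
    rw [← mul_apply_eq_comp, ← (hT t).eq, mul_apply_eq_comp, mem_backwardEigenspace.1 hx, map_smul]

namespace IsIsometrySemigroup

variable {V : ℝ≥0 → G →L[ℂ] G}

theorem defectOperator_mem_backwardEigenspace (hV : IsIsometrySemigroup V) (x : G) :
    hV.defectOperator x ∈ backwardEigenspace V :=
  mem_backwardEigenspace.2 fun t => hV.adjoint_apply_defectOperator t x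

theorem inner_apply_of_mem_backwardEigenspace (hV : IsIsometrySemigroup V) {x y : G}
    (hx : x ∈ backwardEigenspace V) (hy : y ∈ backwardEigenspace V) (s s' : ℝ≥0) :
    ⟪V s x, V s' y⟫_ℂ = (Real.exp (-dist s s') : ℂ) * ⟪x, y⟫_ℂ := by
  rcases le_total s s' with hs | hs
  · obtain ⟨r, rfl⟩ := exists_add_of_le hs
    rw [hV.1.add_apply, hV.inner_apply_apply, ← adjoint_inner_left, mem_backwardEigenspace.1 hx,
      inner_smul_left, Complex.conj_ofReal]
    simp [NNReal.dist_eq]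
  · obtain ⟨r, rfl⟩ := exists_add_of_le hs
    rw [hV.1.add_apply, hV.inner_apply_apply, ← adjoint_inner_right, mem_backwardEigenspace.1 hy,
      inner_smul_right]
    simp [NNReal.dist_eq]

end IsIsometrySemigroup

namespace SgDoublyCommute

variable {V₁ V₂ : ℝ≥0 → G →L[ℂ] G}

theorem commute (hd : SgDoublyCommute V₁ V₂) (s t : ℝ≥0) : Commute (V₁ s) (V₂ t) :=
  hd.1 s t

theorem commute_adjoint (hd : SgDoublyCommute V₁ V₂) (s t : ℝ≥0) :
    Commute (V₁ s) (adjoint (V₂ t)) :=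
  hd.2 s t

theorem symm (hd : SgDoublyCommute V₁ V₂) : SgDoublyCommute V₂ V₁ :=
  ⟨fun t s => (hd.1 s t).symm, fun t s => by
    simpa only [adjoint_comp, adjoint_adjoint] using congrArg adjoint (hd.2 s t)⟩

theorem commute_adjoint_defectOperator (hd : SgDoublyCommute V₁ V₂)
    (hV₁ : IsIsometrySemigroup V₁) (t : ℝ≥0) : Commute hV₁.defectOperator (adjoint (V₂ t)) :=
  (hV₁.commute_defectOperator (fun s => (hd.commute_adjoint s t).symm)
    fun s => (hd.commute s t).symm.star_star).symm

theorem defectOperator_apply_mem_inf_backwardEigenspace (hd : SgDoublyCommute V₁ V₂)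
    (hV₁ : IsIsometrySemigroup V₁) (hV₂ : IsIsometrySemigroup V₂) (y : G) :
    hV₁.defectOperator (hV₂.defectOperator y) ∈ backwardEigenspace V₁ ⊓ backwardEigenspace V₂ :=
  ⟨hV₁.defectOperator_mem_backwardEigenspace _,
    apply_mem_backwardEigenspace (hd.commute_adjoint_defectOperator hV₁)
      (hV₂.defectOperator_mem_backwardEigenspace y)⟩

theorem eq_zero_of_inner_translate_eq_zero (hd : SgDoublyCommute V₁ V₂)
    (hV₁ : IsIsometrySemigroup V₁) (hV₂ : IsIsometrySemigroup V₂) (hcnu₁ : IsCnu V₁)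
    (hcnu₂ : IsCnu V₂) {x : G} (hx : ∀ s t y,
      ⟪V₁ s (V₂ t (hV₁.defectOperator (hV₂.defectOperator y))), x⟫_ℂ = 0) : x = 0 := by
  refine hV₁.eq_zero_of_defectOperator_adjoint_apply_eq_zero hcnu₁ fun s =>
    hV₂.eq_zero_of_defectOperator_adjoint_apply_eq_zero hcnu₂ fun t => ext_inner_left ℂ fun y => ?_
  have hcomm (z : G) : adjoint (V₂ t) (hV₁.defectOperator z) =
      hV₁.defectOperator (adjoint (V₂ t) z) :=
    DFunLike.congr_fun (hd.commute_adjoint_defectOperator hV₁ t).symm.eq z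
  rw [← hV₂.inner_defectOperator_left, hcomm, ← hV₁.inner_defectOperator_left,
    adjoint_inner_right, adjoint_inner_right, inner_zero_right, hx]

theorem isBiexponentialSystem (hd : SgDoublyCommute V₁ V₂) (hV₁ : IsIsometrySemigroup V₁)
    (hV₂ : IsIsometrySemigroup V₂) (hcnu₁ : IsCnu V₁) (hcnu₂ : IsCnu V₂) :
    IsBiexponentialSystem V₁ V₂ fun s t (w : ↥(backwardEigenspace V₁ ⊓ backwardEigenspace V₂)) =>
      V₁ s (V₂ t w) where
  map_fst r s t w := by rw [add_comm, hV₁.1.add_apply]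
  map_snd r s t w := by
    rw [add_comm, hV₂.1.add_apply]
    exact DFunLike.congr_fun (hd.commute s r).symm.eq _
  inner_eq s t w s' t' w' := by
    have hmem (t : ℝ≥0) {x : G} (hx : x ∈ backwardEigenspace V₁) :
        V₂ t x ∈ backwardEigenspace V₁ :=
      apply_mem_backwardEigenspace (hd.symm.commute_adjoint t) hx
    rw [hV₁.inner_apply_of_mem_backwardEigenspace (hmem t w.2.1) (hmem t' w'.2.1),
      hV₂.inner_apply_of_mem_backwardEigenspace w.2.2 w'.2.2, mul_assoc, Submodule.coe_inner]
  isTotalFamily x hx := hd.eq_zero_of_inner_translate_eq_zero hV₁ hV₂ hcnu₁ hcnu₂ fun s t y =>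
    hx (s, t, ⟨_, hd.defectOperator_apply_mem_inf_backwardEigenspace hV₁ hV₂ y⟩)

end SgDoublyCommute

end JointEigenvectors

/-- Two C₀-semigroups are doubly commuting completely nonunitary semigroups of isometries
if and only if the pair is a bishift-semigroup. -/
theorem doubly_commuting_cnu_iff_bishift {H : Type} [NormedAddCommGroup H]
    [InnerProductSpace ℂ H] [CompleteSpace H] (V1 V2 : ℝ≥0 → H →L[ℂ] H)
    (h1 : IsC0Semigroup V1) (h2 : IsC0Semigroup V2) :
    (IsIsometrySemigroup V1 ∧ IsIsometrySemigroup V2 ∧ SgDoublyCommute V1 V2 ∧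
      IsCnu V1 ∧ IsCnu V2) ↔ IsBishiftPair V1 V2 := by
  constructor
  · rintro ⟨hV1, hV2, hd, hcnu1, hcnu2⟩
    have hclosed := (isClosed_backwardEigenspace V1).inter (isClosed_backwardEigenspace V2)
    have := hclosed.completeSpace_coe
    exact (hd.isBiexponentialSystem hV1 hV2 hcnu1 hcnu2).isBishiftPair
  · intro hbishift
    obtain ⟨W, _, _, a, ha⟩ := hbishift.exists_isBiexponentialSystem
    exact ⟨ha.isIsometrySemigroup_fst h1, ha.swap.isIsometrySemigroup_fst h2, ha.sgDoublyCommute,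
      ha.isCnu_fst, ha.swap.isCnu_fst⟩
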